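/- Deodhar's parabolic Kazhdan–Lusztig polynomials of type −1 satisfy P^{J,−1}_{u,v}(q) = P_{w_J u, w_J v}(q) for all u, v ∈ ᴶW, where P_{x,w} are the ordinary Kazhdan–Lusztig polynomials and w_J is the longest element of W_J. In particular P^{J,−1}_{u,v} has constant term 1 whenever u ≤ v. -/

import Mathlib

/-!
The function `z ↦ P(w_J z, w_J v)` on `ᴶW` satisfies the identity that, together with the degree
bound, determines `z ↦ P^{J,-1}(z, v)`. Two facts enter. First, every element of `W_J` can be
stripped from `x` in `P(x, w_J v)`, since `P(sx, w) = P(x, w)` for each left descent `s` of `w`; so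
the terms of the inversion identity of `P(w_J u, w_J v)` group into cosets `W_J z`, and the
coefficient of `P(w_J z, w_J v)` is `∑_{a ∈ W_J} R(w_J u, a z)`. Second, this sum is
`R^{J,-1}(u, z)`, because it satisfies the same recursion. The only critical case of the recursion
is `us = tu` with `t ∈ J`, where it holds because `R(x, ·) - q R(tx, ·)` is antisymmetric under
`z ↦ tz` when `tx > x`, so that its sum over a coset of `W_J` vanishes.
-/

open scoped Classical Polynomial

variable {B W : Type*} [Group W] {M : CoxeterMatrix B}

/-- `ᴶW`: the minimal length right coset representatives of `W_J` in `W`,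
characterized by `ℓ(s w) > ℓ(w)` for all `s ∈ J`. -/
def cosetReps (cs : CoxeterSystem M W) (J : Set B) : Set W :=
  {w | ∀ i ∈ J, cs.length w < cs.length (cs.simple i * w)}

/-- The Bruhat order on a Coxeter group, via the subword property. -/
def bruhatLE (cs : CoxeterSystem M W) (x y : W) : Prop :=
  ∃ ω : List B, cs.IsReduced ω ∧ cs.wordProd ω = y ∧
    ∃ ω' : List B, ω'.Sublist ω ∧ cs.IsReduced ω' ∧ cs.wordProd ω' = x

/-- `q^N P(1/q)` for a polynomial `P` of degree at most `N`. -/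
noncomputable def invPoly (N : ℕ) (P : Polynomial ℤ) : Polynomial ℤ :=
  Polynomial.X ^ (N - P.natDegree) * P.reverse

/-- Deodhar's parabolic Kazhdan–Lusztig data of type `y ∈ {-1, q}` for a (finite)
Coxeter system and a subset `J ⊆ S`:  families `R = R^{J,y}` and `P = P^{J,y}` of
polynomials indexed by elements of `ᴶW` satisfying Deodhar's defining conditions.
Taking `J = ∅` recovers the ordinary `R`- and Kazhdan–Lusztig polynomials. -/
structure ParabolicKL [Fintype W] (cs : CoxeterSystem M W) (J : Set B)
    (y : Polynomial ℤ) where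
  R : W → W → Polynomial ℤ
  P : W → W → Polynomial ℤ
  R_eq_zero : ∀ u ∈ cosetReps cs J, ∀ v ∈ cosetReps cs J,
    ¬ bruhatLE cs u v → R u v = 0
  R_refl : ∀ u ∈ cosetReps cs J, R u u = 1
  R_rec : ∀ u ∈ cosetReps cs J, ∀ v ∈ cosetReps cs J, bruhatLE cs u v → u ≠ v →
    ∀ i : B, cs.length (v * cs.simple i) < cs.length v →
      (cs.length (u * cs.simple i) < cs.length u →
        R u v = R (u * cs.simple i) (v * cs.simple i))
      ∧ (cs.length u < cs.length (u * cs.simple i) →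
          u * cs.simple i ∈ cosetReps cs J →
        R u v = (Polynomial.X - 1) * R u (v * cs.simple i)
          + Polynomial.X * R (u * cs.simple i) (v * cs.simple i))
      ∧ (cs.length u < cs.length (u * cs.simple i) →
          u * cs.simple i ∉ cosetReps cs J →
        R u v = (Polynomial.X - 1 - y) * R u (v * cs.simple i))
  P_eq_zero : ∀ u ∈ cosetReps cs J, ∀ v ∈ cosetReps cs J,
    ¬ bruhatLE cs u v → P u v = 0
  P_refl : ∀ u ∈ cosetReps cs J, P u u = 1
  P_degree : ∀ u ∈ cosetReps cs J, ∀ v ∈ cosetReps cs J, bruhatLE cs u v → u ≠ v →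
    2 * (P u v).natDegree + 1 ≤ cs.length v - cs.length u
  P_inversion : ∀ u ∈ cosetReps cs J, ∀ v ∈ cosetReps cs J, bruhatLE cs u v →
    invPoly (cs.length v - cs.length u) (P u v)
      = ∑ z ∈ Finset.univ.filter
          (fun z => z ∈ cosetReps cs J ∧ bruhatLE cs u z ∧ bruhatLE cs z v),
        R u z * P z v

/-! ### The strong exchange property -/

section StrongExchange

open CoxeterSystem

variable (cs : CoxeterSystem M W)

local prefix:100 "s" => cs.simple
local prefix:100 "ℓ" => cs.length
local prefix:100 "π" => cs.wordProd
local prefix:100 "ris" => cs.rightInvSeq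
local prefix:100 "lis" => cs.leftInvSeq

/-- The action of the simple reflection `s i` on `W × ZMod 2` used to count inversions: it
conjugates the first component by `s i` and flips the sign exactly when that component is `s i`. -/
noncomputable def inversionAction (i : B) : Function.End (W × ZMod 2) :=
  fun p ↦ (s i * p.1 * s i, p.2 + if p.1 = s i then 1 else 0)

lemma prod_map_reverse_alternatingWord {G : Type*} [Monoid G] (f : B → G) (i j : B) (m : ℕ) :
    ((alternatingWord j i (2 * m)).reverse.map f).prod = (f i * f j) ^ m := by
  induction m with
  | zero => simp [alternatingWord]
  | succ m ih =>
    rw [Nat.mul_succ, alternatingWord, alternatingWord]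
    simp [-List.map_reverse, pow_succ', mul_assoc, ih]

lemma leftInvSeq_alternatingWord (i j : B) (m : ℕ) :
    lis (alternatingWord i j (2 * m)) =
      (List.range (2 * m)).map fun k ↦ π (alternatingWord j i (2 * k + 1)) := by
  refine List.ext_getElem (by simp) fun k hk _ ↦ ?_
  rw [cs.getElem_leftInvSeq_alternatingWord i j m k (by simpa using hk)]
  simp

lemma even_count_leftInvSeq_alternatingWord (i j : B) (t : W) :
    Even ((lis (alternatingWord i j (2 * M j i))).count t) := by
  have periodic (k : ℕ) : π (alternatingWord j i (2 * (M j i + k) + 1)) =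
      π (alternatingWord j i (2 * k + 1)) := by
    have half (n : ℕ) : (2 * n + 1) / 2 = n := by omega
    simp [prod_alternatingWord_eq_mul_pow, half, pow_add]
  rw [leftInvSeq_alternatingWord, two_mul, List.range_add, List.map_append, List.map_map,
    List.count_append]
  simp only [Function.comp_def, periodic, Even.add_self]

lemma prod_map_inversionAction_smul (ω : List B) (t : W) (e : ZMod 2) :
    (ω.map (inversionAction cs)).prod • (t, e) = (π ω * t * (π ω)⁻¹, e + (ris ω).count t) := by
  induction ω with
  | nil => simp
  | cons i ω ih =>
    have conj_eq_iff : π ω * t * (π ω)⁻¹ = s i ↔ (π ω)⁻¹ * s i * π ω = t := by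
      constructor <;> rintro h <;> simp [← h, mul_assoc]
    rw [List.map_cons, List.prod_cons, mul_smul, ih]
    ext
    · simp [inversionAction, wordProd_cons, mul_assoc]
    · simp [inversionAction, rightInvSeq, conj_eq_iff, List.count_cons, add_assoc]

lemma isLiftable_inversionAction : M.IsLiftable (inversionAction cs) := by
  intro i j
  refine funext fun p ↦ ?_
  have even_count : ((ris (alternatingWord j i (2 * M i j)).reverse).count p.1 : ZMod 2) = 0 := by
    rw [rightInvSeq_reverse, List.count_reverse, ZMod.natCast_eq_zero_iff_even]
    exact even_count_leftInvSeq_alternatingWord cs j i p.1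
  have prod_eq_one : π (alternatingWord j i (2 * M i j)).reverse = 1 :=
    (prod_map_reverse_alternatingWord _ i j _).trans (cs.simple_mul_simple_pow i j)
  have trivial_action := prod_map_inversionAction_smul cs (alternatingWord j i (2 * M i j)).reverse
    p.1 p.2
  rw [prod_map_reverse_alternatingWord, prod_eq_one, even_count] at trivial_action
  simpa [Function.End.one_def] using trivial_action

/-- The parity `η(w, t)` of the number of occurrences of `t` in the right inversion sequence of a
word for `w`; it does not depend on the word because `inversionAction` extends to an action
of `W`. -/
noncomputable def inversionParity (w t : W) : ZMod 2 :=
  (cs.lift ⟨inversionAction cs, isLiftable_inversionAction cs⟩ w • (t, (0 : ZMod 2))).2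

lemma lift_inversionAction_wordProd (ω : List B) :
    cs.lift ⟨inversionAction cs, isLiftable_inversionAction cs⟩ (π ω) =
      (ω.map (inversionAction cs)).prod := by
  simp only [wordProd, map_list_prod, List.map_map, Function.comp_def, lift_apply_simple]

lemma inversionParity_wordProd (ω : List B) (t : W) :
    inversionParity cs (π ω) t = (ris ω).count t := by
  rw [inversionParity, lift_inversionAction_wordProd, prod_map_inversionAction_smul, zero_add]

lemma inversionParity_mul (x y t : W) :
    inversionParity cs (x * y) t = inversionParity cs x (y * t * y⁻¹) + inversionParity cs y t := by
  obtain ⟨ω, rfl⟩ := cs.wordProd_surjective x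
  obtain ⟨ω', rfl⟩ := cs.wordProd_surjective y
  rw [inversionParity, map_mul, lift_inversionAction_wordProd, lift_inversionAction_wordProd,
    mul_smul, prod_map_inversionAction_smul, prod_map_inversionAction_smul,
    inversionParity_wordProd, inversionParity_wordProd, zero_add, add_comm]

lemma inversionParity_one (t : W) : inversionParity cs 1 t = 0 := by
  simpa using inversionParity_wordProd cs [] t

lemma inversionParity_simple (i : B) (t : W) :
    inversionParity cs (s i) t = if s i = t then 1 else 0 := by
  simpa [List.count_singleton] using inversionParity_wordProd cs [i] t

variable {cs}

lemma inversionParity_self {t : W} (ht : cs.IsReflection t) : inversionParity cs t t = 1 := by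
  obtain ⟨x, i, rfl⟩ := ht
  have cancel := inversionParity_mul cs x x⁻¹ (x * s i * x⁻¹)
  have expand := inversionParity_mul cs x (s i * x⁻¹) (x * s i * x⁻¹)
  have expand' := inversionParity_mul cs (s i) x⁻¹ (x * s i * x⁻¹)
  simp only [mul_assoc, mul_inv_rev, inv_inv, inv_simple, inv_mul_cancel_left, inv_mul_cancel,
    mul_inv_cancel, mul_one, simple_mul_simple_cancel_left, inversionParity_one,
    inversionParity_simple, if_true] at cancel expand expand' ⊢
  rw [expand, expand', add_left_comm, ← cancel, add_zero]

lemma isRightInversion_of_inversionParity_ne_zero {w t : W} (h : inversionParity cs w t ≠ 0) :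
    cs.IsRightInversion w t := by
  obtain ⟨ω, hω, rfl⟩ := cs.exists_isReduced w
  refine cs.isRightInversion_of_mem_rightInvSeq hω (List.count_pos_iff.1 (Nat.pos_of_ne_zero ?_))
  rintro hcount
  exact h (by rw [inversionParity_wordProd, hcount, Nat.cast_zero])

lemma inversionParity_eq_one_of_isRightInversion {w t : W} (h : cs.IsRightInversion w t) :
    inversionParity cs w t = 1 := by
  have vanish : inversionParity cs (w * t) t = 0 := by
    by_contra hne
    exact h.1.isRightInversion_mul_left_iff.1 (isRightInversion_of_inversionParity_ne_zero hne) h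
  rw [inversionParity_mul, mul_inv_cancel_right, inversionParity_self h.1] at vanish
  exact (CharTwo.add_eq_zero).1 vanish

lemma isRightInversion_or_of_mul_simple {x t : W} {i : B} (h : cs.IsRightInversion (x * s i) t) :
    t = s i ∨ cs.IsRightInversion x (s i * t * s i) := by
  have expand := inversionParity_mul cs x (s i) t
  rw [inversionParity_eq_one_of_isRightInversion h, inversionParity_simple, inv_simple] at expand
  by_cases ht : s i = t
  · exact Or.inl ht.symm
  · rw [if_neg ht, add_zero] at expand
    exact Or.inr (isRightInversion_of_inversionParity_ne_zero (by simp [← expand]))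

lemma exists_eraseIdx_of_isRightInversion {ω : List B} {t : W}
    (h : cs.IsRightInversion (π ω) t) : ∃ j < ω.length, π ω * t = π (ω.eraseIdx j) := by
  have mem : t ∈ ris ω := by
    have parity := inversionParity_eq_one_of_isRightInversion h
    rw [inversionParity_wordProd] at parity
    refine List.count_pos_iff.1 (Nat.pos_of_ne_zero fun hcount ↦ ?_)
    simp [hcount] at parity
  obtain ⟨j, hj, rfl⟩ := List.mem_iff_getElem.1 mem
  refine ⟨j, by simpa using hj, ?_⟩
  rw [← wordProd_mul_getD_rightInvSeq, List.getD_eq_getElem _ _ hj]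

lemma exists_eraseIdx_of_isLeftDescent {ω : List B} {i : B} (h : cs.IsLeftDescent (π ω) i) :
    ∃ j < ω.length, s i * π ω = π (ω.eraseIdx j) := by
  have mul_conj : π ω * ((π ω)⁻¹ * s i * π ω) = s i * π ω := by group
  rw [← mul_conj]
  refine exists_eraseIdx_of_isRightInversion ⟨⟨(π ω)⁻¹, i, by simp⟩, ?_⟩
  rwa [mul_conj]

variable (cs) in
lemma exists_isReduced_sublist (ω : List B) :
    ∃ ω', ω'.Sublist ω ∧ cs.IsReduced ω' ∧ π ω' = π ω := by
  induction ω with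
  | nil => exact ⟨[], .refl _, by simp [CoxeterSystem.IsReduced], rfl⟩
  | cons i ω ih =>
    obtain ⟨ω', hsub, hred, hprod⟩ := ih
    by_cases hi : cs.IsLeftDescent (π ω') i
    · obtain ⟨j, hj, herase⟩ := exists_eraseIdx_of_isLeftDescent hi
      refine ⟨ω'.eraseIdx j, ((ω'.eraseIdx_sublist j).trans hsub).cons i, ?_, ?_⟩
      · have := cs.isLeftDescent_iff.1 hi
        rw [CoxeterSystem.IsReduced, ← herase, List.length_eraseIdx_of_lt hj, ← hred.eq]
        omega
      · rw [← herase, wordProd_cons, hprod]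
    · refine ⟨i :: ω', hsub.cons_cons i, ?_, by rw [wordProd_cons, wordProd_cons, hprod]⟩
      rw [CoxeterSystem.IsReduced, wordProd_cons, cs.not_isLeftDescent_iff.1 hi, hred.eq,
        List.length_cons]

lemma exists_lt_length_of_isLeftDescent_mul {a y : W} {i : B} (ha : ¬cs.IsLeftDescent a i)
    (hay : cs.IsLeftDescent (a * y) i) : ∃ y', ℓ y' < ℓ y ∧ s i * (a * y) = a * y' := by
  obtain ⟨ω, hω, rfl⟩ := cs.exists_isReduced a
  obtain ⟨ω', hω', rfl⟩ := cs.exists_isReduced y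
  rw [← wordProd_append] at hay
  obtain ⟨j, hj, herase⟩ := exists_eraseIdx_of_isLeftDescent hay
  rw [List.length_append] at hj
  rw [wordProd_append] at herase
  rcases lt_or_ge j ω.length with hlt | hge
  · rw [List.eraseIdx_append_of_lt_length hlt, wordProd_append, ← mul_assoc,
      mul_left_inj] at herase
    have := cs.length_wordProd_le (ω.eraseIdx j)
    rw [← herase, cs.not_isLeftDescent_iff.1 ha, hω.eq, List.length_eraseIdx_of_lt hlt] at this
    omega
  · rw [List.eraseIdx_append_of_length_le hge, wordProd_append] at herase
    refine ⟨_, (cs.length_wordProd_le _).trans_lt ?_, herase⟩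
    rw [hω'.eq, List.length_eraseIdx_of_lt (by omega)]
    omega

lemma isLeftDescent_mul_simple_iff {x : W} {i j : B} (h : s i * x ≠ x * s j) :
    cs.IsLeftDescent (x * s j) i ↔ cs.IsLeftDescent x i := by
  have commutes {x : W} (heq : s i * (x * s j) = x) : s i * x = x * s j := by
    rw [← cs.simple_mul_simple_cancel_left (w := x * s j) i, heq]
  have descends {x : W} (hx : s i * x ≠ x * s j) (hxj : cs.IsLeftDescent (x * s j) i) :
      cs.IsLeftDescent x i := by
    by_contra hxi
    obtain ⟨y, hy, heq⟩ := exists_lt_length_of_isLeftDescent_mul hxi hxj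
    rw [length_simple, Nat.lt_one_iff, length_eq_zero_iff] at hy
    refine hx (commutes ?_)
    rwa [hy, mul_one] at heq
  refine ⟨descends h, fun hx ↦ descends (fun heq ↦ h (commutes ?_)) ?_⟩
  · rwa [simple_mul_simple_cancel_right] at heq
  · rwa [simple_mul_simple_cancel_right]

lemma isRightDescent_simple_mul_iff {x : W} {i j : B} (h : s i * x ≠ x * s j) :
    cs.IsRightDescent (s i * x) j ↔ cs.IsRightDescent x j := by
  rw [← isLeftDescent_inv_iff, ← isLeftDescent_inv_iff, mul_inv_rev, inv_simple]
  refine isLeftDescent_mul_simple_iff fun heq ↦ h ?_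
  simpa using congrArg (·⁻¹) heq.symm

end StrongExchange

/-! ### The Bruhat order -/

section Bruhat

variable {cs : CoxeterSystem M W}

local prefix:100 "s" => cs.simple
local prefix:100 "ℓ" => cs.length
local prefix:100 "π" => cs.wordProd

variable (cs) in
/-- An edge of the Bruhat graph: `x` is obtained from `y` by multiplication on the right with a
reflection that decreases the length. The Bruhat order is the reflexive transitive closure of this
relation. -/
def BruhatStep (x y : W) : Prop := cs.IsRightInversion y (y⁻¹ * x)

lemma bruhatStep_mul_simple {x : W} {i : B} (h : cs.IsRightDescent x i) :
    BruhatStep cs (x * s i) x := by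
  rwa [BruhatStep, inv_mul_cancel_left, cs.isRightInversion_simple_iff_isRightDescent]

lemma BruhatStep.mul_simple {x y : W} (h : BruhatStep cs x y) (i : B) :
    x * s i = y ∨ BruhatStep cs (x * s i) (y * s i) := by
  have hconj : (y * s i)⁻¹ * (x * s i) = s i * (y⁻¹ * x) * s i := by simp [mul_assoc]
  have hrefl : cs.IsReflection (s i * (y⁻¹ * x) * s i) := by simpa using h.1.conj (s i)
  refine or_iff_not_imp_right.2 fun hstep ↦ ?_
  rw [BruhatStep, hconj, ← hrefl.isRightInversion_mul_left_iff, ← hconj, mul_inv_cancel_left,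
    hconj] at hstep
  rcases isRightInversion_or_of_mul_simple hstep with heq | hinv
  · rw [mul_assoc, mul_eq_left, mul_eq_one_iff_eq_inv, cs.inv_simple] at heq
    rw [inv_mul_eq_iff_eq_mul.1 heq, cs.simple_mul_simple_cancel_right]
  · have : cs.IsRightInversion (y * (y⁻¹ * x)) (y⁻¹ * x) := by simpa [mul_assoc] using hinv
    exact absurd h (h.1.isRightInversion_mul_left_iff.1 this)

lemma reflTransGen_bruhatStep_mul_simple {x y : W}
    (h : Relation.ReflTransGen (BruhatStep cs) x y) (i : B) :
    Relation.ReflTransGen (BruhatStep cs) (x * s i) y ∨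
      Relation.ReflTransGen (BruhatStep cs) (x * s i) (y * s i) := by
  induction h using Relation.ReflTransGen.head_induction_on with
  | refl => exact Or.inr .refl
  | head hstep hchain ih =>
    rcases hstep.mul_simple i with heq | hstep'
    · exact Or.inl (heq ▸ hchain)
    · exact ih.imp (.head hstep') (.head hstep')

lemma exists_isReduced_sublist_of_reflTransGen {x : W} {ω : List B}
    (h : Relation.ReflTransGen (BruhatStep cs) x (π ω)) :
    ∃ ω', ω'.Sublist ω ∧ cs.IsReduced ω' ∧ π ω' = x := by
  induction h using Relation.ReflTransGen.head_induction_on with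
  | refl => exact exists_isReduced_sublist cs ω
  | @head x y hstep _ ih =>
    obtain ⟨ω', hsub, -, rfl⟩ := ih
    obtain ⟨j, -, herase⟩ := exists_eraseIdx_of_isRightInversion hstep
    obtain ⟨ω'', hsub', hred, hprod⟩ := exists_isReduced_sublist cs (ω'.eraseIdx j)
    rw [mul_inv_cancel_left] at herase
    exact ⟨ω'', hsub'.trans ((ω'.eraseIdx_sublist j).trans hsub), hred, hprod.trans herase.symm⟩

lemma reflTransGen_of_sublist {ω ω' : List B} (hω : cs.IsReduced ω) (hsub : ω'.Sublist ω) :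
    Relation.ReflTransGen (BruhatStep cs) (π ω') (π ω) := by
  induction ω using List.reverseRecOn generalizing ω' with
  | nil => rw [List.sublist_nil.1 hsub]
  | append_singleton ω i ih =>
    have hinit : cs.IsReduced ω := by simpa using hω.take ω.length
    have hprod (ν : List B) : π (ν ++ [i]) = π ν * s i := by
      rw [cs.wordProd_append, cs.wordProd_singleton]
    have hlast : Relation.ReflTransGen (BruhatStep cs) (π ω) (π ω * s i) := by
      have hstep : BruhatStep cs (π ω * s i * s i) (π ω * s i) := by
        refine bruhatStep_mul_simple ?_
        rw [CoxeterSystem.IsRightDescent, cs.simple_mul_simple_cancel_right, ← hprod, hω.eq,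
          hinit.eq]
        simp
      rw [cs.simple_mul_simple_cancel_right] at hstep
      exact .single hstep
    obtain ⟨ν, ν', rfl, hν, hν'⟩ := List.sublist_append_iff.1 hsub
    rw [hprod]
    rcases List.sublist_singleton.1 hν' with rfl | rfl
    · rw [List.append_nil]
      exact (ih hinit hν).trans hlast
    · rw [hprod]
      rcases reflTransGen_bruhatStep_mul_simple (ih hinit hν) i with h | h
      · exact h.trans hlast
      · exact h

lemma bruhatLE_iff_reflTransGen {x y : W} :
    bruhatLE cs x y ↔ Relation.ReflTransGen (BruhatStep cs) x y := by
  constructor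
  · rintro ⟨ω, hω, rfl, ω', hsub, -, rfl⟩
    exact reflTransGen_of_sublist hω hsub
  · intro h
    obtain ⟨ω, hω, rfl⟩ := cs.exists_isReduced y
    exact ⟨ω, hω, rfl, exists_isReduced_sublist_of_reflTransGen h⟩

namespace bruhatLE

variable {x y z x' y' : W} {i : B}

protected lemma refl (x : W) : bruhatLE cs x x :=
  bruhatLE_iff_reflTransGen.2 .refl

protected lemma trans (hxy : bruhatLE cs x y) (hyz : bruhatLE cs y z) : bruhatLE cs x z :=
  bruhatLE_iff_reflTransGen.2 <|
    (bruhatLE_iff_reflTransGen.1 hxy).trans (bruhatLE_iff_reflTransGen.1 hyz)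

lemma one_le (x : W) : bruhatLE cs 1 x := by
  obtain ⟨ω, hω, rfl⟩ := cs.exists_isReduced x
  exact bruhatLE_iff_reflTransGen.2 (reflTransGen_of_sublist hω ω.nil_sublist)

lemma length_le (h : bruhatLE cs x y) : ℓ x ≤ ℓ y := by
  obtain ⟨ω, hω, rfl, ω', hsub, hω', rfl⟩ := h
  rw [hω.eq, hω'.eq]
  exact hsub.length_le

lemma eq_of_length_le (h : bruhatLE cs x y) (hlen : ℓ y ≤ ℓ x) : x = y := by
  obtain ⟨ω, hω, rfl, ω', hsub, hω', rfl⟩ := h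
  rw [hω.eq, hω'.eq] at hlen
  rw [hsub.eq_of_length_le hlen]

lemma length_lt (h : bruhatLE cs x y) (hne : x ≠ y) : ℓ x < ℓ y :=
  lt_of_not_ge fun hlen ↦ hne (h.eq_of_length_le hlen)

protected lemma inv (h : bruhatLE cs x y) : bruhatLE cs x⁻¹ y⁻¹ := by
  obtain ⟨ω, hω, rfl, ω', hsub, hω', rfl⟩ := h
  exact ⟨ω.reverse, hω.reverse, by simp, ω'.reverse, hsub.reverse, hω'.reverse, by simp⟩

protected lemma mul (hxy : bruhatLE cs x y) (hxy' : bruhatLE cs x' y')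
    (hlen : ℓ(y * y') = ℓ y + ℓ y') : bruhatLE cs (x * x') (y * y') := by
  obtain ⟨ω, hω, rfl, ν, hν, -, rfl⟩ := hxy
  obtain ⟨ω', hω', rfl, ν', hν', -, rfl⟩ := hxy'
  rw [← cs.wordProd_append, ← cs.wordProd_append, bruhatLE_iff_reflTransGen]
  refine reflTransGen_of_sublist ?_ (hν.append hν')
  rw [CoxeterSystem.IsReduced, cs.wordProd_append, hlen, hω.eq, hω'.eq, List.length_append]

lemma mul_simple_le_self (hi : cs.IsRightDescent x i) : bruhatLE cs (x * s i) x :=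
  bruhatLE_iff_reflTransGen.2 (.single (bruhatStep_mul_simple hi))

lemma self_le_simple_mul (hi : ¬cs.IsLeftDescent x i) : bruhatLE cs x (s i * x) := by
  have := bruhatLE.inv (mul_simple_le_self (cs := cs) (x := (s i * x)⁻¹) (i := i) ?_)
  · simpa using this
  · rwa [cs.isRightDescent_inv_iff, ← cs.isLeftDescent_iff_not_isLeftDescent_mul.not_left]

lemma mul_simple_le (h : bruhatLE cs x y) (hi : cs.IsRightDescent y i) :
    bruhatLE cs (x * s i) y := by
  rcases reflTransGen_bruhatStep_mul_simple (bruhatLE_iff_reflTransGen.1 h) i with hle | hle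
  · exact bruhatLE_iff_reflTransGen.2 hle
  · exact (bruhatLE_iff_reflTransGen.2 hle).trans (mul_simple_le_self hi)

lemma simple_mul_le (h : bruhatLE cs x y) (hi : cs.IsLeftDescent y i) :
    bruhatLE cs (s i * x) y := by
  simpa using (h.inv.mul_simple_le (cs.isRightDescent_inv_iff.2 hi)).inv

lemma le_mul_simple_or (h : bruhatLE cs x y) (i : B) :
    bruhatLE cs x (y * s i) ∨ cs.IsRightDescent x i ∧ bruhatLE cs (x * s i) (y * s i) := by
  obtain ⟨ω, hω, hprod⟩ := cs.exists_isReduced (y * s i)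
  have hy : y = π (ω ++ [i]) := by
    rw [cs.wordProd_append, ← hprod, cs.wordProd_singleton, cs.simple_mul_simple_cancel_right]
  rw [bruhatLE_iff_reflTransGen, hy] at h
  obtain ⟨ω', hsub, hω', rfl⟩ := exists_isReduced_sublist_of_reflTransGen h
  obtain ⟨ν, ν', rfl, hν, hν'⟩ := List.sublist_append_iff.1 hsub
  have hνred : cs.IsReduced ν := by simpa using hω'.take ν.length
  rcases List.sublist_singleton.1 hν' with rfl | rfl
  · exact Or.inl ⟨ω, hω, hprod.symm, ν, hν, hνred, by rw [List.append_nil]⟩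
  · have hcancel : π (ν ++ [i]) * s i = π ν := by
      rw [cs.wordProd_append, cs.wordProd_singleton, cs.simple_mul_simple_cancel_right]
    refine Or.inr ⟨?_, ω, hω, hprod.symm, ν, hν, hνred, hcancel.symm⟩
    rw [CoxeterSystem.IsRightDescent, hcancel, hω'.eq, hνred.eq]
    simp

lemma mul_simple_le_mul_simple (h : bruhatLE cs x y) (hi : cs.IsRightDescent x i) :
    bruhatLE cs (x * s i) (y * s i) := by
  rcases h.le_mul_simple_or i with hle | hle
  · exact (mul_simple_le_self hi).trans hle
  · exact hle.2

lemma le_mul_simple (h : bruhatLE cs x y) (hi : ¬cs.IsRightDescent x i) :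
    bruhatLE cs x (y * s i) :=
  (h.le_mul_simple_or i).resolve_right fun hle ↦ hi hle.1

lemma le_simple_mul (h : bruhatLE cs x y) (hi : ¬cs.IsLeftDescent x i) :
    bruhatLE cs x (s i * y) := by
  simpa using (h.inv.le_mul_simple (cs.isRightDescent_inv_iff.not.2 hi)).inv

end bruhatLE

end Bruhat

/-! ### Parabolic subgroups and minimal coset representatives -/

section Parabolic

variable {cs : CoxeterSystem M W} {J : Set B} {a b u v w x z : W} {i : B}

local prefix:100 "s" => cs.simple
local prefix:100 "ℓ" => cs.length
local prefix:100 "π" => cs.wordProd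

variable (cs J) in
/-- The standard parabolic subgroup `W_J`, generated by the simple reflections indexed by `J`. -/
abbrev parabolicSubgroup : Subgroup W := Subgroup.closure (cs.simple '' J)

lemma simple_mem_parabolicSubgroup (hi : i ∈ J) : s i ∈ parabolicSubgroup cs J :=
  Subgroup.subset_closure ⟨i, hi, rfl⟩

lemma wordProd_mem_parabolicSubgroup {ω : List B} (hω : ∀ i ∈ ω, i ∈ J) :
    π ω ∈ parabolicSubgroup cs J :=
  Subgroup.list_prod_mem _ <| List.forall_mem_map.2 fun i hi ↦
    simple_mem_parabolicSubgroup (hω i hi)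

lemma exists_isReduced_of_mem_parabolicSubgroup (ha : a ∈ parabolicSubgroup cs J) :
    ∃ ω, (∀ i ∈ ω, i ∈ J) ∧ cs.IsReduced ω ∧ π ω = a := by
  have hword : ∃ ω, (∀ i ∈ ω, i ∈ J) ∧ π ω = a := by
    induction ha using Subgroup.closure_induction_left with
    | one => exact ⟨[], by simp, by simp⟩
    | mul_left x hx y _ ih =>
      obtain ⟨⟨i, hi, rfl⟩, ω, hω, rfl⟩ := And.intro hx ih
      exact ⟨i :: ω, List.forall_mem_cons.2 ⟨hi, hω⟩, cs.wordProd_cons i ω⟩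
    | inv_mul_cancel x hx y _ ih =>
      obtain ⟨⟨i, hi, rfl⟩, ω, hω, rfl⟩ := And.intro hx ih
      exact ⟨i :: ω, List.forall_mem_cons.2 ⟨hi, hω⟩, by rw [cs.wordProd_cons, cs.inv_simple]⟩
  obtain ⟨ω, hω, rfl⟩ := hword
  obtain ⟨ω', hsub, hred, hprod⟩ := exists_isReduced_sublist cs ω
  exact ⟨ω', fun i hi ↦ hω i (hsub.subset hi), hred, hprod⟩

@[elab_as_elim]
lemma parabolicSubgroup_induction {p : (a : W) → a ∈ parabolicSubgroup cs J → Prop}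
    (one : p 1 (one_mem (parabolicSubgroup cs J)))
    (simple_mul : ∀ (i : B) (hi : i ∈ J) (b : W) (hb : b ∈ parabolicSubgroup cs J),
      ¬cs.IsLeftDescent b i → p b hb → p (s i * b) (mul_mem (simple_mem_parabolicSubgroup hi) hb))
    (ha : a ∈ parabolicSubgroup cs J) : p a ha := by
  obtain ⟨ω, hω, hred, rfl⟩ := exists_isReduced_of_mem_parabolicSubgroup ha
  induction ω with
  | nil => simpa only [cs.wordProd_nil] using one
  | cons i ω ih =>
    obtain ⟨hi, hω⟩ := List.forall_mem_cons.1 hω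
    have htail : cs.IsReduced ω := by simpa using hred.drop 1
    have hmem := wordProd_mem_parabolicSubgroup (cs := cs) hω
    simp only [cs.wordProd_cons]
    refine simple_mul i hi _ hmem ?_ (ih hω htail hmem)
    rw [cs.not_isLeftDescent_iff, ← cs.wordProd_cons, hred.eq, htail.eq, List.length_cons]

lemma exists_isLeftDescent_of_mem_parabolicSubgroup (ha : a ∈ parabolicSubgroup cs J)
    (hne : a ≠ 1) : ∃ i ∈ J, cs.IsLeftDescent a i := by
  induction ha using parabolicSubgroup_induction with
  | one => exact absurd rfl hne
  | simple_mul i hi b _ hbi _ =>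
    refine ⟨i, hi, ?_⟩
    rwa [cs.isLeftDescent_iff_not_isLeftDescent_mul, cs.simple_mul_simple_cancel_left]

lemma mem_cosetReps_iff : w ∈ cosetReps cs J ↔ ∀ i ∈ J, ¬cs.IsLeftDescent w i :=
  forall₂_congr fun i _ ↦
    ⟨fun h ↦ h.not_gt, fun h ↦ by rw [cs.not_isLeftDescent_iff.1 h]; exact Nat.lt_succ_self _⟩

lemma length_mul_of_forall_length_le (hz : ∀ b ∈ parabolicSubgroup cs J, ℓ z ≤ ℓ(b * z))
    (ha : a ∈ parabolicSubgroup cs J) : ℓ(a * z) = ℓ a + ℓ z := by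
  induction ha using parabolicSubgroup_induction with
  | one => simp
  | simple_mul i hi b hb hbi ih =>
    have hbzi : ¬cs.IsLeftDescent (b * z) i := by
      intro hdesc
      obtain ⟨y, hy, heq⟩ := exists_lt_length_of_isLeftDescent_mul hbi hdesc
      have hmin := hz (b⁻¹ * s i * b)
        (mul_mem (mul_mem (inv_mem hb) (simple_mem_parabolicSubgroup hi)) hb)
      rw [mul_assoc, mul_assoc, heq, inv_mul_cancel_left] at hmin
      omega
    rw [mul_assoc, cs.not_isLeftDescent_iff.1 hbzi, cs.not_isLeftDescent_iff.1 hbi, ih]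
    omega

variable (cs J) in
lemma exists_mul_eq_and_forall_length_le (x : W) :
    ∃ a ∈ parabolicSubgroup cs J, ∃ z, a * z = x ∧
      ∀ b ∈ parabolicSubgroup cs J, ℓ z ≤ ℓ(b * z) := by
  let b := Function.argmin fun b : parabolicSubgroup cs J ↦ ℓ(b * x)
  refine ⟨(b : W)⁻¹, inv_mem b.2, b * x, inv_mul_cancel_left _ _, fun c hc ↦ ?_⟩
  rw [← mul_assoc]
  exact Function.argmin_le (fun b : parabolicSubgroup cs J ↦ ℓ(b * x)) ⟨c * b, mul_mem hc b.2⟩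

lemma length_le_length_mul_of_mem_cosetReps (hz : z ∈ cosetReps cs J) :
    ∀ b ∈ parabolicSubgroup cs J, ℓ z ≤ ℓ(b * z) := by
  obtain ⟨a, ha, y, rfl, hy⟩ := exists_mul_eq_and_forall_length_le cs J z
  suffices a = 1 by rwa [this, one_mul]
  by_contra hne
  obtain ⟨i, hi, hdesc⟩ := exists_isLeftDescent_of_mem_parabolicSubgroup ha hne
  have hlen := length_mul_of_forall_length_le hy ha
  have hlen' := length_mul_of_forall_length_le hy (mul_mem (simple_mem_parabolicSubgroup hi) ha)
  have hmin := cs.not_isLeftDescent_iff.1 (mem_cosetReps_iff.1 hz i hi)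
  have := cs.isLeftDescent_iff.1 hdesc
  rw [← mul_assoc] at hmin
  omega

lemma length_mul_of_mem_cosetReps (ha : a ∈ parabolicSubgroup cs J) (hz : z ∈ cosetReps cs J) :
    ℓ(a * z) = ℓ a + ℓ z :=
  length_mul_of_forall_length_le (length_le_length_mul_of_mem_cosetReps hz) ha

variable (cs J) in
lemma bijective_parabolicSubgroup_mul_cosetReps :
    Function.Bijective fun p : parabolicSubgroup cs J × cosetReps cs J ↦ (p.1 : W) * p.2 := by
  constructor
  · rintro ⟨⟨a, ha⟩, ⟨z, hz⟩⟩ ⟨⟨b, hb⟩, ⟨y, hy⟩⟩ (heq : a * z = b * y)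
    have hlen := length_mul_of_mem_cosetReps (mul_mem (inv_mem ha) hb) hy
    have hlen' := length_mul_of_mem_cosetReps (mul_mem (inv_mem hb) ha) hz
    rw [mul_assoc, ← heq, inv_mul_cancel_left] at hlen
    rw [mul_assoc, heq, inv_mul_cancel_left] at hlen'
    have hzero : ℓ(a⁻¹ * b) = 0 := by omega
    rw [cs.length_eq_zero_iff, inv_mul_eq_one] at hzero
    subst hzero
    simpa using heq
  · intro x
    obtain ⟨a, ha, z, rfl, hz⟩ := exists_mul_eq_and_forall_length_le cs J x
    refine ⟨⟨⟨a, ha⟩, ⟨z, mem_cosetReps_iff.2 fun i hi ↦ ?_⟩⟩, rfl⟩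
    exact (hz _ (simple_mem_parabolicSubgroup hi)).not_gt

lemma isRightDescent_mul_iff_of_mul_simple_mem_cosetReps (ha : a ∈ parabolicSubgroup cs J)
    (hz : z ∈ cosetReps cs J) (hzi : z * s i ∈ cosetReps cs J) :
    cs.IsRightDescent (a * z) i ↔ cs.IsRightDescent z i := by
  rw [CoxeterSystem.IsRightDescent, CoxeterSystem.IsRightDescent, mul_assoc,
    length_mul_of_mem_cosetReps ha hz, length_mul_of_mem_cosetReps ha hzi, Nat.add_lt_add_iff_left]

lemma mul_simple_mem_cosetReps (hz : z ∈ cosetReps cs J) (hi : cs.IsRightDescent z i) :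
    z * s i ∈ cosetReps cs J := by
  refine mem_cosetReps_iff.2 fun k hk ↦ ?_
  have hzk := mem_cosetReps_iff.1 hz k hk
  by_cases heq : s k * z = z * s i
  · rw [CoxeterSystem.IsLeftDescent, heq] at hzk
    exact absurd hi hzk
  · rwa [isLeftDescent_mul_simple_iff heq]

lemma exists_simple_mul_eq_of_notMem_cosetReps (hu : u ∈ cosetReps cs J)
    (hui : u * s i ∉ cosetReps cs J) : ∃ k ∈ J, s k * u = u * s i := by
  simp only [mem_cosetReps_iff, not_forall, not_not] at hui
  obtain ⟨k, hk, hdesc⟩ := hui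
  refine ⟨k, hk, by_contra fun hne ↦ mem_cosetReps_iff.1 hu k hk ?_⟩
  rwa [isLeftDescent_mul_simple_iff hne] at hdesc

lemma bruhatLE.mul_left_of_mem_cosetReps (ha : a ∈ parabolicSubgroup cs J)
    (hv : v ∈ cosetReps cs J) (h : bruhatLE cs u v) : bruhatLE cs (a * u) (a * v) :=
  (bruhatLE.refl a).mul h (length_mul_of_mem_cosetReps ha hv)

lemma bruhatLE_of_le_mul (hu : u ∈ cosetReps cs J) (ha : a ∈ parabolicSubgroup cs J)
    (h : bruhatLE cs u (a * v)) : bruhatLE cs u v := by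
  induction ha using parabolicSubgroup_induction with
  | one => rwa [one_mul] at h
  | simple_mul i hi b _ _ ih =>
    refine ih ?_
    rw [mul_assoc] at h
    simpa using h.le_simple_mul (mem_cosetReps_iff.1 hu i hi)

lemma bruhatLE_of_mul_le_mul (hu : u ∈ cosetReps cs J) (ha : a ∈ parabolicSubgroup cs J)
    (hb : b ∈ parabolicSubgroup cs J) (h : bruhatLE cs (a * u) (b * v)) : bruhatLE cs u v := by
  have hle : bruhatLE cs u (a * u) := by
    simpa using (bruhatLE.one_le a).mul (.refl u) (length_mul_of_mem_cosetReps ha hu)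
  exact bruhatLE_of_le_mul hu hb (hle.trans h)

variable (cs J) in
/-- `w` is an element of maximal length of the parabolic subgroup `W_J`, that is, `w = w_J`. -/
structure IsParabolicLongest (w : W) : Prop where
  mem : w ∈ parabolicSubgroup cs J
  length_le : ∀ a ∈ parabolicSubgroup cs J, ℓ a ≤ ℓ w

namespace IsParabolicLongest

lemma isLeftDescent (hw : IsParabolicLongest cs J w) (hi : i ∈ J) : cs.IsLeftDescent w i := by
  by_contra hdesc
  have hle := hw.length_le _ (mul_mem (simple_mem_parabolicSubgroup hi) hw.mem)
  rw [cs.not_isLeftDescent_iff.1 hdesc] at hle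
  omega

lemma isRightDescent (hw : IsParabolicLongest cs J w) (hi : i ∈ J) : cs.IsRightDescent w i := by
  by_contra hdesc
  have hle := hw.length_le _ (mul_mem hw.mem (simple_mem_parabolicSubgroup hi))
  rw [cs.not_isRightDescent_iff.1 hdesc] at hle
  omega

lemma length_add_length_inv_mul (hw : IsParabolicLongest cs J w)
    (ha : a ∈ parabolicSubgroup cs J) : ℓ a + ℓ(a⁻¹ * w) = ℓ w := by
  induction ha using parabolicSubgroup_induction with
  | one => simp
  | simple_mul i hi b _ hbi ih =>
    obtain ⟨y, hy, heq⟩ := exists_lt_length_of_isLeftDescent_mul (y := b⁻¹ * w) hbi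
      (by simpa using hw.isLeftDescent hi)
    have hy_eq : (s i * b)⁻¹ * w = y := by
      rw [mul_inv_rev, cs.inv_simple, mul_assoc, inv_mul_eq_iff_eq_mul, ← heq,
        mul_inv_cancel_left]
    have hle := cs.length_mul_le (s i * b) y
    rw [← hy_eq, mul_inv_cancel_left, hy_eq, cs.not_isLeftDescent_iff.1 hbi] at hle
    rw [hy_eq, cs.not_isLeftDescent_iff.1 hbi]
    omega

lemma exists_mul_simple_eq (hw : IsParabolicLongest cs J w) (hi : i ∈ J) :
    ∃ k ∈ J, w * s i = s k * w := by
  have hmem : w * s i * w⁻¹ ∈ parabolicSubgroup cs J :=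
    mul_mem (mul_mem hw.mem (simple_mem_parabolicSubgroup hi)) (inv_mem hw.mem)
  have hlen : ℓ(w * s i * w⁻¹) = 1 := by
    have hadd := hw.length_add_length_inv_mul hmem
    have hdesc := cs.isRightDescent_iff.1 (hw.isRightDescent hi)
    have hinv : (w * s i * w⁻¹)⁻¹ * w = w * s i := by simp [mul_assoc]
    rw [hinv] at hadd
    omega
  obtain ⟨k, hk, hdesc⟩ := exists_isLeftDescent_of_mem_parabolicSubgroup hmem
    fun h ↦ by simp [h] at hlen
  refine ⟨k, hk, ?_⟩
  rw [cs.isLeftDescent_iff, hlen, Nat.add_eq_right, cs.length_eq_zero_iff,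
    mul_eq_one_iff_inv_eq, cs.inv_simple] at hdesc
  rw [hdesc, inv_mul_cancel_right]

lemma isLeftDescent_mul (hw : IsParabolicLongest cs J w) (hz : z ∈ cosetReps cs J)
    (hi : i ∈ J) : cs.IsLeftDescent (w * z) i := by
  rw [CoxeterSystem.IsLeftDescent, ← mul_assoc, length_mul_of_mem_cosetReps hw.mem hz,
    length_mul_of_mem_cosetReps (mul_mem (simple_mem_parabolicSubgroup hi) hw.mem) hz]
  exact Nat.add_lt_add_right (hw.isLeftDescent hi) _

lemma exists_mul_mul_simple_eq (hw : IsParabolicLongest cs J w) (hz : z ∈ cosetReps cs J)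
    (hzi : z * s i ∉ cosetReps cs J) : ∃ k ∈ J, w * z * s i = s k * (w * z) := by
  obtain ⟨j, hj, heq⟩ := exists_simple_mul_eq_of_notMem_cosetReps hz hzi
  obtain ⟨k, hk, hconj⟩ := hw.exists_mul_simple_eq hj
  exact ⟨k, hk, by rw [mul_assoc, ← heq, ← mul_assoc, hconj, mul_assoc]⟩

end IsParabolicLongest

end Parabolic

/-! ### Reflected polynomials -/

section Reflect

open Polynomial

variable {R : Type*} [Semiring R] {N : ℕ}

lemma reflect_add_eq_X_pow_mul_reflect {p : R[X]} (hp : p.natDegree ≤ N) (k : ℕ) :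
    p.reflect (N + k) = X ^ k * p.reflect N := by
  rw [X_pow_mul, ← mul_one p, reflect_mul p 1 hp (by simp), mul_one, reflect_one]

lemma invPoly_eq_reflect {p : ℤ[X]} (hp : p.natDegree ≤ N) : invPoly N p = p.reflect N := by
  rw [invPoly, reverse, ← reflect_add_eq_X_pow_mul_reflect le_rfl, Nat.add_sub_cancel' hp]

lemma eq_zero_of_reflect_eq_self {p : R[X]} (hp : 2 * p.natDegree < N) (h : p.reflect N = p) :
    p = 0 := by
  ext k
  rw [coeff_zero]
  rcases lt_or_ge p.natDegree k with hk | hk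
  · exact coeff_eq_zero_of_natDegree_lt hk
  · rw [← h, coeff_reflect, revAt_le (by omega)]
    exact coeff_eq_zero_of_natDegree_lt (by omega)

/- This is the uniqueness half of the construction of Kazhdan-Lusztig polynomials: by descending
induction on `d x`, only the diagonal term of the sum survives, so `D x` is self-reciprocal. -/
lemma eq_zero_of_reflect_eq_sum {α : Type*} [Fintype α] {d : α → ℕ} {L : ℕ} {r : α → α → R[X]}
    {D : α → R[X]} (hr : ∀ x, r x x = 1) (hr_lt : ∀ x z, r x z ≠ 0 → z ≠ x → d x < d z)
    (hdeg : ∀ x, D x ≠ 0 → 2 * (D x).natDegree < L - d x)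
    (hD : ∀ x, D x ≠ 0 → (D x).reflect (L - d x) = ∑ z, r x z * D z) (x : α) : D x = 0 := by
  induction hn : L - d x using Nat.strong_induction_on generalizing x with
  | _ n ih =>
    by_contra hx
    refine hx (eq_zero_of_reflect_eq_self (hdeg x hx) ?_)
    rw [hD x hx, Fintype.sum_eq_single x, hr, one_mul]
    intro z hz
    by_cases hrz : r x z = 0
    · rw [hrz, zero_mul]
    · have := hdeg x hx
      have := hr_lt x z hrz hz
      rw [ih _ (by omega) z rfl, mul_zero]

end Reflect

/-! ### `R`-polynomials and Kazhdan-Lusztig polynomials -/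

section KazhdanLusztig

open Polynomial

variable {cs : CoxeterSystem M W} {J : Set B} {a u v w x z : W} {i j : B}

local prefix:100 "s" => cs.simple
local prefix:100 "ℓ" => cs.length

/-- The operator taking the column `R(·, w)` of ordinary `R`-polynomials to the column `R(·, ws)`
when `ws > w`. Up to sign twists, it is multiplication by `-q T_s⁻¹` on the right in the Hecke
algebra. -/
noncomputable def heckeRight (cs : CoxeterSystem M W) (i : B) (f : W → ℤ[X]) (x : W) : ℤ[X] :=
  if cs.IsRightDescent x i then f (x * cs.simple i)
  else (X - 1) * f x + X * f (x * cs.simple i)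

/-- The mirror image of `heckeRight`: it takes the column `R(·, w)` of ordinary `R`-polynomials to
the column `R(·, sw)` when `sw > w`. -/
noncomputable def heckeLeft (cs : CoxeterSystem M W) (i : B) (f : W → ℤ[X]) (x : W) : ℤ[X] :=
  if cs.IsLeftDescent x i then f (cs.simple i * x)
  else (X - 1) * f x + X * f (cs.simple i * x)

lemma heckeRight_heckeLeft_comm (f : W → ℤ[X]) :
    heckeRight cs j (heckeLeft cs i f) = heckeLeft cs i (heckeRight cs j f) := by
  funext x
  by_cases heq : s i * x = x * s j
  · have hxj : s i * (x * s j) = x := by rw [← heq, cs.simple_mul_simple_cancel_left]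
    have hdesc : cs.IsLeftDescent x i ↔ cs.IsRightDescent x j := by
      rw [CoxeterSystem.IsLeftDescent, CoxeterSystem.IsRightDescent, heq]
    have hdesc_mul : cs.IsLeftDescent (x * s j) i ↔ cs.IsRightDescent (x * s j) j := by
      rw [CoxeterSystem.IsLeftDescent, CoxeterSystem.IsRightDescent, hxj,
        cs.simple_mul_simple_cancel_right]
    simp only [heckeRight, heckeLeft, heq, hxj, hdesc, hdesc_mul,
      cs.simple_mul_simple_cancel_right]
  · simp only [heckeRight, heckeLeft, isLeftDescent_mul_simple_iff heq,
      isRightDescent_simple_mul_iff heq, mul_assoc]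
    split_ifs <;> ring

lemma heckeLeft_single_one :
    heckeLeft cs i (Pi.single 1 1) = heckeRight cs i (Pi.single 1 1) := by
  funext x
  by_cases hx : x = s i
  · simp [hx, heckeLeft, heckeRight, CoxeterSystem.IsLeftDescent, CoxeterSystem.IsRightDescent]
  · have hleft : s i * x ≠ 1 := by rwa [Ne, mul_eq_one_iff_inv_eq, cs.inv_simple, eq_comm]
    have hright : x * s i ≠ 1 := by rwa [Ne, mul_eq_one_iff_eq_inv, cs.inv_simple]
    by_cases hx1 : x = 1
    · simp [hx1, heckeLeft, heckeRight, CoxeterSystem.IsLeftDescent, CoxeterSystem.IsRightDescent]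
    · simp [heckeLeft, heckeRight, hx1, hleft, hright]

lemma mem_cosetReps_empty (x : W) : x ∈ cosetReps cs (∅ : Set B) :=
  mem_cosetReps_iff.2 fun _ h ↦ h.elim

variable [Fintype W] {y : ℤ[X]}

lemma sum_eq_sum_not_isLeftDescent {A : Type*} [AddCommMonoid A] (i : B) (f : W → A) :
    ∑ z, f z = ∑ z : {z // ¬cs.IsLeftDescent z i}, (f z + f (s i * z)) := by
  let e : {z // ¬cs.IsLeftDescent z i} ≃ {z // cs.IsLeftDescent z i} :=
    (Equiv.mulLeft (s i)).subtypeEquiv fun z ↦ by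
      rw [Equiv.coe_mulLeft, cs.isLeftDescent_iff_not_isLeftDescent_mul,
        cs.isLeftDescent_iff_not_isLeftDescent_mul, not_not]
  rw [Finset.sum_add_distrib, ← Fintype.sum_subtype_add_sum_subtype (cs.IsLeftDescent · i),
    ← e.sum_comp, add_comm]
  rfl

namespace ParabolicKL

lemma two_mul_natDegree_P_le (kl : ParabolicKL cs J y) (hu : u ∈ cosetReps cs J)
    (hv : v ∈ cosetReps cs J) (h : bruhatLE cs u v) :
    2 * (kl.P u v).natDegree ≤ ℓ v - ℓ u := by
  rcases eq_or_ne u v with rfl | huv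
  · simp [kl.P_refl u hu]
  · exact (Nat.le_succ _).trans (kl.P_degree u hu v hv h huv)

lemma reflect_P (kl : ParabolicKL cs J y) (hu : u ∈ cosetReps cs J)
    (hv : v ∈ cosetReps cs J) (h : bruhatLE cs u v) :
    (kl.P u v).reflect (ℓ v - ℓ u) = ∑ z : cosetReps cs J, kl.R u z * kl.P z v := by
  have hdeg := kl.two_mul_natDegree_P_le hu hv h
  rw [← invPoly_eq_reflect (by omega), kl.P_inversion u hu v hv h,
    ← Finset.sum_subtype {z | z ∈ cosetReps cs J} (by simp) fun z ↦ kl.R u z * kl.P z v]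
  refine Finset.sum_subset (Finset.monotone_filter_right _ fun z _ hz ↦ hz.1) fun z hz hz' ↦ ?_
  simp only [Finset.mem_filter_univ, not_and] at hz hz'
  by_cases huz : bruhatLE cs u z
  · rw [kl.P_eq_zero z hz v hv (hz' hz huz), mul_zero]
  · rw [kl.R_eq_zero u hu z hz huz, zero_mul]

variable (kl : ParabolicKL cs (∅ : Set B) y)
include kl

lemma reflect_P_of_empty (h : bruhatLE cs u v) :
    (kl.P u v).reflect (ℓ v - ℓ u) = ∑ z, kl.R u z * kl.P z v := by
  rw [kl.reflect_P (mem_cosetReps_empty u) (mem_cosetReps_empty v) h]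
  exact (Equiv.subtypeUnivEquiv mem_cosetReps_empty).sum_comp fun z ↦ kl.R u z * kl.P z v

lemma R_eq_of_isRightDescent (hw : cs.IsRightDescent w i) (hx : cs.IsRightDescent x i) :
    kl.R x w = kl.R (x * s i) (w * s i) := by
  have mem := mem_cosetReps_empty (cs := cs)
  rcases eq_or_ne x w with rfl | hne
  · rw [kl.R_refl _ (mem _), kl.R_refl _ (mem _)]
  by_cases hle : bruhatLE cs x w
  · exact (kl.R_rec x (mem _) w (mem _) hle hne i hw).1 hx
  · rw [kl.R_eq_zero _ (mem _) _ (mem _) hle, kl.R_eq_zero _ (mem _) _ (mem _)]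
    intro h
    refine hle ?_
    simpa using (h.trans (bruhatLE.mul_simple_le_self hw)).mul_simple_le hw

lemma R_eq_of_not_isRightDescent (hw : cs.IsRightDescent w i) (hx : ¬cs.IsRightDescent x i) :
    kl.R x w = (X - 1) * kl.R x (w * s i) + X * kl.R (x * s i) (w * s i) := by
  have mem := mem_cosetReps_empty (cs := cs)
  have hne : x ≠ w := by rintro rfl; exact hx hw
  by_cases hle : bruhatLE cs x w
  · have hlt : ℓ x < ℓ(x * s i) := by rw [cs.not_isRightDescent_iff.1 hx]; exact Nat.lt_succ_self _
    exact (kl.R_rec x (mem _) w (mem _) hle hne i hw).2.1 hlt (mem _)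
  · have hle' : ¬bruhatLE cs x (w * s i) := fun h ↦ hle (h.trans (.mul_simple_le_self hw))
    have hle'' : ¬bruhatLE cs (x * s i) (w * s i) := fun h ↦
      hle' ((bruhatLE.refl x).le_mul_simple hx |>.trans h)
    rw [kl.R_eq_zero _ (mem _) _ (mem _) hle, kl.R_eq_zero _ (mem _) _ (mem _) hle',
      kl.R_eq_zero _ (mem _) _ (mem _) hle'', mul_zero, mul_zero, add_zero]

lemma R_mul_simple (hw : ¬cs.IsRightDescent w i) :
    (kl.R · (w * s i)) = heckeRight cs i (kl.R · w) := by
  have hwi : cs.IsRightDescent (w * s i) i := by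
    rwa [cs.isRightDescent_iff_not_isRightDescent_mul, cs.simple_mul_simple_cancel_right]
  funext x
  rw [heckeRight]
  split_ifs with hx
  · rw [kl.R_eq_of_isRightDescent hwi hx, cs.simple_mul_simple_cancel_right]
  · rw [kl.R_eq_of_not_isRightDescent hwi hx, cs.simple_mul_simple_cancel_right]

lemma R_one : (kl.R · 1) = Pi.single 1 1 := by
  have mem := mem_cosetReps_empty (cs := cs)
  funext x
  rcases eq_or_ne x 1 with rfl | hx
  · rw [kl.R_refl _ (mem _), Pi.single_eq_same]
  · rw [Pi.single_eq_of_ne hx, kl.R_eq_zero _ (mem _) _ (mem _)]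
    exact fun h ↦ hx (h.eq_of_length_le (by simp))

/- The recursion of `R` on the right suffices to compute it, and `R(·, 1)` is symmetric, so the
recursion on the left follows because left and right multiplications commute. -/
lemma R_simple_mul (hw : ¬cs.IsLeftDescent w i) :
    (kl.R · (s i * w)) = heckeLeft cs i (kl.R · w) := by
  induction hn : ℓ w using Nat.strong_induction_on generalizing w with
  | _ n ih =>
    rcases eq_or_ne w 1 with rfl | hw1
    · have hcol := kl.R_mul_simple (w := 1) (i := i) (by simp [CoxeterSystem.IsRightDescent])
      rwa [one_mul, kl.R_one, ← heckeLeft_single_one, ← mul_one (s i), ← kl.R_one] at hcol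
    · obtain ⟨j, hj⟩ := cs.exists_rightDescent_of_ne_one hw1
      obtain ⟨w, rfl⟩ : ∃ w', w' * s j = w := ⟨w * s j, cs.simple_mul_simple_cancel_right j⟩
      have hwj : ¬cs.IsRightDescent w j := by
        rwa [cs.isRightDescent_iff_not_isRightDescent_mul,
          cs.simple_mul_simple_cancel_right] at hj
      have hlen := cs.not_isRightDescent_iff.1 hwj
      have hleni := cs.not_isLeftDescent_iff.1 hw
      have hle := cs.length_mul_simple (s i * w) j
      have hle' := cs.length_simple_mul w i
      rw [← mul_assoc] at hleni ⊢
      have hwi : ¬cs.IsLeftDescent w i := cs.not_isLeftDescent_iff.2 (by omega)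
      rw [kl.R_mul_simple (cs.not_isRightDescent_iff.2 (by omega)), ih _ (by omega) hwi rfl,
        kl.R_mul_simple hwj, heckeRight_heckeLeft_comm]

lemma R_sub_X_mul_R_simple_mul (hx : ¬cs.IsLeftDescent x i) (z : W) :
    kl.R x (s i * z) - X * kl.R (s i * x) (s i * z)
      = -(kl.R x z - X * kl.R (s i * x) z) := by
  have hxi : cs.IsLeftDescent (s i * x) i := by
    rwa [cs.isLeftDescent_iff_not_isLeftDescent_mul, cs.simple_mul_simple_cancel_left]
  have ascent : ∀ z, ¬cs.IsLeftDescent z i → kl.R x (s i * z) - X * kl.R (s i * x) (s i * z)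
      = -(kl.R x z - X * kl.R (s i * x) z) := by
    intro z hz
    have hcol := congrFun (kl.R_simple_mul hz)
    simp only [heckeLeft] at hcol
    rw [hcol, hcol, if_neg hx, if_pos hxi, cs.simple_mul_simple_cancel_left]
    ring
  by_cases hz : cs.IsLeftDescent z i
  · rw [cs.isLeftDescent_iff_not_isLeftDescent_mul] at hz
    have := ascent _ hz
    rw [cs.simple_mul_simple_cancel_left] at this
    rw [this, neg_neg]
  · exact ascent z hz

lemma isMonicOfDegree_R (h : bruhatLE cs x w) :
    IsMonicOfDegree (kl.R x w) (ℓ w - ℓ x) := by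
  have mem := mem_cosetReps_empty (cs := cs)
  induction hn : ℓ w using Nat.strong_induction_on generalizing x w with
  | _ n ih =>
    subst hn
    rcases eq_or_ne w 1 with rfl | hw1
    · obtain rfl := h.eq_of_length_le (by simp)
      simp [kl.R_refl _ (mem _)]
    obtain ⟨i, hw⟩ := cs.exists_rightDescent_of_ne_one hw1
    have hlen := cs.isRightDescent_iff.1 hw
    by_cases hx : cs.IsRightDescent x i
    · have hlenx := cs.isRightDescent_iff.1 hx
      rw [kl.R_eq_of_isRightDescent hw hx]
      convert ih _ (by omega) (h.mul_simple_le_mul_simple hx) rfl using 1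
      omega
    have hlenx := cs.not_isRightDescent_iff.1 hx
    have hle := h.le_mul_simple hx
    have := hle.length_le
    rw [kl.R_eq_of_not_isRightDescent hw hx,
      show ℓ w - ℓ x = 1 + (ℓ(w * s i) - ℓ x) by omega, ← C_1]
    refine ((isMonicOfDegree_X_sub_one 1).mul (ih _ (by omega) hle rfl)).add_right ?_
    by_cases hle' : bruhatLE cs (x * s i) (w * s i)
    · have := (ih _ (by omega) hle' rfl).natDegree_eq
      have := hle'.length_le
      refine natDegree_mul_le.trans_lt ?_
      rw [natDegree_X]
      omega
    · rw [kl.R_eq_zero _ (mem _) _ (mem _) hle', mul_zero, natDegree_zero]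
      omega

lemma coeff_zero_P (h : bruhatLE cs x w) : (kl.P x w).coeff 0 = 1 := by
  have mem := mem_cosetReps_empty (cs := cs)
  have hcoeff : (kl.P x w).coeff 0 = ∑ z, (kl.R x z * kl.P z w).coeff (ℓ w - ℓ x) := by
    rw [← finsetSum_coeff, ← kl.reflect_P_of_empty h, coeff_reflect, revAt_le le_rfl,
      Nat.sub_self]
  rw [hcoeff, Fintype.sum_eq_single w, kl.P_refl _ (mem _), mul_one]
  · have hR := kl.isMonicOfDegree_R h
    rw [← hR.natDegree_eq]
    exact hR.monic
  · intro z hz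
    by_cases hxz : bruhatLE cs x z
    · by_cases hzw : bruhatLE cs z w
      · have hR := (kl.isMonicOfDegree_R hxz).natDegree_eq
        have hP := kl.P_degree z (mem _) w (mem _) hzw hz
        have := hxz.length_le
        have := hzw.length_le
        exact coeff_eq_zero_of_natDegree_lt (natDegree_mul_le.trans_lt (by omega))
      · rw [kl.P_eq_zero _ (mem _) _ (mem _) hzw, mul_zero, coeff_zero]
    · rw [kl.R_eq_zero _ (mem _) _ (mem _) hxz, zero_mul, coeff_zero]

lemma reflect_P_sub_P_simple_mul (hw : cs.IsLeftDescent w i) (hx : ¬cs.IsLeftDescent x i)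
    (h : bruhatLE cs x w) :
    (kl.P x w - kl.P (s i * x) w).reflect (ℓ w - ℓ x) =
      ∑ z : {z // ¬cs.IsLeftDescent z i},
        (kl.R x z - X * kl.R (s i * x) z) * (kl.P z w - kl.P (s i * z) w) := by
  have hsxw := h.simple_mul_le hw
  have hdeg := kl.two_mul_natDegree_P_le (mem_cosetReps_empty _) (mem_cosetReps_empty _) hsxw
  have hlen : ℓ w - ℓ x = ℓ w - ℓ(s i * x) + 1 := by
    have := hsxw.length_le
    have := cs.not_isLeftDescent_iff.1 hx
    omega
  rw [reflect_sub, kl.reflect_P_of_empty h, hlen, reflect_add_eq_X_pow_mul_reflect (by omega),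
    pow_one, kl.reflect_P_of_empty hsxw, Finset.mul_sum, ← Finset.sum_sub_distrib,
    sum_eq_sum_not_isLeftDescent (cs := cs) i]
  refine Fintype.sum_congr _ _ fun z ↦ ?_
  linear_combination kl.P (s i * z) w * kl.R_sub_X_mul_R_simple_mul hx z

lemma P_sub_P_simple_mul_eq_zero (hw : cs.IsLeftDescent w i)
    (x : {x // ¬cs.IsLeftDescent x i}) : kl.P x w - kl.P (s i * x) w = 0 := by
  have mem := mem_cosetReps_empty (cs := cs)
  have hle_simple (x : {x // ¬cs.IsLeftDescent x i}) : bruhatLE cs x (s i * x) :=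
    .self_le_simple_mul x.2
  have hlen (x : {x // ¬cs.IsLeftDescent x i}) : ℓ(s i * x) = ℓ x + 1 :=
    cs.not_isLeftDescent_iff.1 x.2
  have hle (x : {x // ¬cs.IsLeftDescent x i}) (hx : kl.P x w - kl.P (s i * x) w ≠ 0) :
      bruhatLE cs x w := by
    contrapose! hx
    rw [kl.P_eq_zero _ (mem _) _ (mem _) hx, kl.P_eq_zero _ (mem _) _ (mem _)
      fun h ↦ hx ((hle_simple x).trans h), sub_zero]
  refine eq_zero_of_reflect_eq_sum (d := fun x : {x // ¬cs.IsLeftDescent x i} ↦ ℓ x) (L := ℓ w)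
    (r := fun x z ↦ kl.R x z - X * kl.R (s i * x) z) (D := fun x ↦ kl.P x w - kl.P (s i * x) w)
    (fun x ↦ ?_) (fun x z hxz hne ↦ ?_) (fun x hx ↦ ?_)
    (fun x hx ↦ kl.reflect_P_sub_P_simple_mul hw x.2 (hle x hx)) x
  · rw [kl.R_refl _ (mem _), kl.R_eq_zero _ (mem _) _ (mem _), mul_zero, sub_zero]
    intro h
    have := h.length_le
    have := hlen x
    omega
  · refine bruhatLE.length_lt ?_ (fun h ↦ hne (Subtype.ext h).symm) (cs := cs)
    contrapose! hxz
    rw [kl.R_eq_zero _ (mem _) _ (mem _) hxz, kl.R_eq_zero _ (mem _) _ (mem _)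
      fun h ↦ hxz ((hle_simple x).trans h), mul_zero, sub_zero]
  · have hxw := hle x hx
    have hdeg := kl.P_degree x (mem _) w (mem _) hxw (fun h ↦ x.2 (h ▸ hw))
    have hdeg' := kl.two_mul_natDegree_P_le (mem _) (mem _) (hxw.simple_mul_le hw)
    have := hlen x
    have := natDegree_sub_le (kl.P x w) (kl.P (s i * x) w)
    omega

lemma P_simple_mul (hw : cs.IsLeftDescent w i) (x : W) : kl.P (s i * x) w = kl.P x w := by
  by_cases hx : cs.IsLeftDescent x i
  · rw [cs.isLeftDescent_iff_not_isLeftDescent_mul] at hx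
    have := kl.P_sub_P_simple_mul_eq_zero hw ⟨_, hx⟩
    rwa [cs.simple_mul_simple_cancel_left, sub_eq_zero] at this
  · exact (sub_eq_zero.1 (kl.P_sub_P_simple_mul_eq_zero hw ⟨x, hx⟩)).symm

lemma P_mul_of_mem_parabolicSubgroup (hw : ∀ i ∈ J, cs.IsLeftDescent w i)
    (ha : a ∈ parabolicSubgroup cs J) (x : W) : kl.P (a * x) w = kl.P x w := by
  induction ha using parabolicSubgroup_induction with
  | one => rw [one_mul]
  | simple_mul i hi b _ _ ih => rw [mul_assoc, kl.P_simple_mul (hw i hi), ih]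

end ParabolicKL

end KazhdanLusztig

/-! ### Comparison of the parabolic and the ordinary polynomials -/

section Comparison

open Polynomial

variable [Fintype W] {cs : CoxeterSystem M W} {J : Set B} {u v w x z : W} {i : B} {y : ℤ[X]}

local prefix:100 "s" => cs.simple
local prefix:100 "ℓ" => cs.length

namespace ParabolicKL

/-- The sum of the ordinary `R`-polynomials `R(x, ·)` over the coset `W_J z`. For `x = w_J u` it is
the parabolic `R`-polynomial `R^{J,-1}(u, z)`. -/
noncomputable def cosetSumR (kl : ParabolicKL cs (∅ : Set B) y) (J : Set B) (x z : W) : ℤ[X] :=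
  ∑ a : parabolicSubgroup cs J, kl.R x (a * z)

variable (kl : ParabolicKL cs (∅ : Set B) y)
include kl

lemma cosetSumR_eq_zero (hw : w ∈ parabolicSubgroup cs J) (hu : u ∈ cosetReps cs J)
    (h : ¬bruhatLE cs u z) : kl.cosetSumR J (w * u) z = 0 :=
  Fintype.sum_eq_zero _ fun a ↦ kl.R_eq_zero _ (mem_cosetReps_empty _) _ (mem_cosetReps_empty _)
    fun hle ↦ h (bruhatLE_of_mul_le_mul hu hw a.2 hle)

lemma cosetSumR_self (hw : IsParabolicLongest cs J w) (hu : u ∈ cosetReps cs J) :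
    kl.cosetSumR J (w * u) u = 1 := by
  have mem := mem_cosetReps_empty (cs := cs)
  rw [cosetSumR, Fintype.sum_eq_single ⟨w, hw.mem⟩, kl.R_refl _ (mem _)]
  refine fun a ha ↦ kl.R_eq_zero _ (mem _) _ (mem _) fun hle ↦ ha ?_
  refine Subtype.ext (mul_right_cancel (hle.eq_of_length_le ?_)).symm
  rw [length_mul_of_mem_cosetReps a.2 hu, length_mul_of_mem_cosetReps hw.mem hu]
  exact Nat.add_le_add_right (hw.length_le a a.2) _

lemma cosetSumR_of_isRightDescent (hz : z ∈ cosetReps cs J) (hzi : cs.IsRightDescent z i)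
    (hx : cs.IsRightDescent x i) :
    kl.cosetSumR J x z = kl.cosetSumR J (x * s i) (z * s i) := by
  refine Fintype.sum_congr _ _ fun a ↦ ?_
  have haz : cs.IsRightDescent (a * z) i := (isRightDescent_mul_iff_of_mul_simple_mem_cosetReps
    a.2 hz (mul_simple_mem_cosetReps hz hzi)).2 hzi
  rw [kl.R_eq_of_isRightDescent haz hx, mul_assoc]

lemma cosetSumR_of_not_isRightDescent (hz : z ∈ cosetReps cs J) (hzi : cs.IsRightDescent z i)
    (hx : ¬cs.IsRightDescent x i) :
    kl.cosetSumR J x z =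
      (X - 1) * kl.cosetSumR J x (z * s i) + X * kl.cosetSumR J (x * s i) (z * s i) := by
  simp only [cosetSumR, Finset.mul_sum, ← Finset.sum_add_distrib]
  refine Fintype.sum_congr _ _ fun a ↦ ?_
  have haz : cs.IsRightDescent (a * z) i := (isRightDescent_mul_iff_of_mul_simple_mem_cosetReps
    a.2 hz (mul_simple_mem_cosetReps hz hzi)).2 hzi
  rw [kl.R_eq_of_not_isRightDescent haz hx, mul_assoc]

/- Left multiplication by `s i` permutes `W_J z` and, by `R_sub_X_mul_R_simple_mul`, negates the
summands of the difference of the two sides. -/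
lemma cosetSumR_eq_X_mul_cosetSumR_simple_mul (hi : i ∈ J) (hx : ¬cs.IsLeftDescent x i) (z : W) :
    kl.cosetSumR J x z = X * kl.cosetSumR J (s i * x) z := by
  rw [← sub_eq_zero, ← self_eq_neg, cosetSumR, cosetSumR, Finset.mul_sum,
    ← Finset.sum_sub_distrib, ← Finset.sum_neg_distrib]
  let t : parabolicSubgroup cs J := ⟨s i, simple_mem_parabolicSubgroup hi⟩
  refine Fintype.sum_equiv (Equiv.mulLeft t) _ _ fun a ↦ (neg_eq_iff_eq_neg.2 ?_).symm
  rw [Equiv.coe_mulLeft, Subgroup.coe_mul, mul_assoc]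
  exact kl.R_sub_X_mul_R_simple_mul hx _

lemma cosetSumR_of_mul_simple_notMem_cosetReps (hw : IsParabolicLongest cs J w)
    (hu : u ∈ cosetReps cs J) (hui : u * s i ∉ cosetReps cs J) (hz : z ∈ cosetReps cs J)
    (hzi : cs.IsRightDescent z i) :
    kl.cosetSumR J (w * u) z = X * kl.cosetSumR J (w * u) (z * s i) := by
  obtain ⟨k, hk, heq⟩ := hw.exists_mul_mul_simple_eq hu hui
  have hdesc := hw.isLeftDescent_mul hu hk
  rw [kl.cosetSumR_of_isRightDescent hz hzi (by rwa [CoxeterSystem.IsRightDescent, heq]), heq,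
    kl.cosetSumR_eq_X_mul_cosetSumR_simple_mul hk, cs.simple_mul_simple_cancel_left]
  rwa [← cs.isLeftDescent_iff_not_isLeftDescent_mul]

variable (pkl : ParabolicKL cs J (-1))

lemma R_eq_cosetSumR (hw : IsParabolicLongest cs J w) (hu : u ∈ cosetReps cs J)
    (hz : z ∈ cosetReps cs J) : pkl.R u z = kl.cosetSumR J (w * u) z := by
  induction hn : ℓ z using Nat.strong_induction_on generalizing u z with
  | _ n ih =>
    subst hn
    by_cases hle : ¬bruhatLE cs u z
    · rw [pkl.R_eq_zero u hu z hz hle, kl.cosetSumR_eq_zero hw.mem hu hle]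
    rw [not_not] at hle
    rcases eq_or_ne u z with rfl | hne
    · rw [pkl.R_refl u hu, kl.cosetSumR_self hw hu]
    obtain ⟨i, hzi⟩ := cs.exists_rightDescent_of_ne_one (w := z) <| by
      rintro rfl
      exact hne (hle.eq_of_length_le (by simp))
    have hzs := mul_simple_mem_cosetReps hz hzi
    obtain ⟨hdown, hup, hout⟩ := pkl.R_rec u hu z hz hle hne i hzi
    by_cases hui : cs.IsRightDescent u i
    · have hus := mul_simple_mem_cosetReps hu hui
      rw [hdown hui, ih _ hzi hus hzs rfl, kl.cosetSumR_of_isRightDescent hz hzi, mul_assoc]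
      rwa [isRightDescent_mul_iff_of_mul_simple_mem_cosetReps hw.mem hu hus]
    have hlt : ℓ u < ℓ(u * s i) := by
      rw [cs.not_isRightDescent_iff.1 hui]; exact Nat.lt_succ_self _
    by_cases hus : u * s i ∈ cosetReps cs J
    · rw [hup hlt hus, ih _ hzi hu hzs rfl, ih _ hzi hus hzs rfl,
        kl.cosetSumR_of_not_isRightDescent hz hzi, mul_assoc]
      rwa [isRightDescent_mul_iff_of_mul_simple_mem_cosetReps hw.mem hu hus]
    · rw [hout hlt hus, ih _ hzi hu hzs rfl, sub_neg_eq_add, sub_add_cancel,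
        kl.cosetSumR_of_mul_simple_notMem_cosetReps hw hu hus hz hzi]

lemma reflect_P_longest_mul (hw : IsParabolicLongest cs J w) (hu : u ∈ cosetReps cs J)
    (hv : v ∈ cosetReps cs J) (h : bruhatLE cs u v) :
    (kl.P (w * u) (w * v)).reflect (ℓ v - ℓ u) =
      ∑ z : cosetReps cs J, pkl.R u z * kl.P (w * z) (w * v) := by
  have hlen : ℓ v - ℓ u = ℓ(w * v) - ℓ(w * u) := by
    rw [length_mul_of_mem_cosetReps hw.mem hu, length_mul_of_mem_cosetReps hw.mem hv,
      Nat.add_sub_add_left]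
  rw [hlen, kl.reflect_P_of_empty (h.mul_left_of_mem_cosetReps hw.mem hv),
    ← (bijective_parabolicSubgroup_mul_cosetReps cs J).sum_comp, Fintype.sum_prod_type_right]
  refine Fintype.sum_congr _ _ fun z ↦ ?_
  rw [kl.R_eq_cosetSumR pkl hw hu z.2, cosetSumR, Finset.sum_mul]
  refine Fintype.sum_congr _ _ fun a ↦ ?_
  have hdesc i (hi : i ∈ J) := hw.isLeftDescent_mul hv hi
  rw [kl.P_mul_of_mem_parabolicSubgroup hdesc a.2,
    kl.P_mul_of_mem_parabolicSubgroup hdesc hw.mem]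

lemma P_eq_P_longest_mul (hw : IsParabolicLongest cs J w) (hu : u ∈ cosetReps cs J)
    (hv : v ∈ cosetReps cs J) : pkl.P u v = kl.P (w * u) (w * v) := by
  have mem := mem_cosetReps_empty (cs := cs)
  have hle (u : cosetReps cs J) (hD : pkl.P u v - kl.P (w * u) (w * v) ≠ 0) :
      bruhatLE cs u v ∧ (u : W) ≠ v := by
    contrapose! hD
    by_cases h : bruhatLE cs u v
    · rw [hD h, pkl.P_refl v hv, kl.P_refl _ (mem _), sub_self]
    · rw [pkl.P_eq_zero u u.2 v hv h, kl.P_eq_zero _ (mem _) _ (mem _)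
        fun h' ↦ h (bruhatLE_of_mul_le_mul u.2 hw.mem hw.mem h'), sub_zero]
  refine sub_eq_zero.1 <| eq_zero_of_reflect_eq_sum (d := fun u : cosetReps cs J ↦ ℓ u) (L := ℓ v)
    (r := fun u z ↦ pkl.R u z) (D := fun u ↦ pkl.P u v - kl.P (w * u) (w * v))
    (fun u ↦ pkl.R_refl u u.2) (fun u z huz hne ↦ ?_) (fun u hD ↦ ?_) (fun u hD ↦ ?_) ⟨u, hu⟩
  · refine bruhatLE.length_lt ?_ (fun h ↦ hne (Subtype.ext h).symm) (cs := cs)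
    exact not_not.1 fun h ↦ huz (pkl.R_eq_zero u u.2 z z.2 h)
  · obtain ⟨huv, hne⟩ := hle u hD
    have hdeg := pkl.P_degree u u.2 v hv huv hne
    have hdeg' := kl.P_degree _ (mem (w * u)) _ (mem (w * v))
      (huv.mul_left_of_mem_cosetReps hw.mem hv) fun h ↦ hne (mul_left_cancel h)
    rw [length_mul_of_mem_cosetReps hw.mem u.2, length_mul_of_mem_cosetReps hw.mem hv] at hdeg'
    have := natDegree_sub_le (pkl.P u v) (kl.P (w * u) (w * v))
    omega
  · obtain ⟨huv, -⟩ := hle u hD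
    simp only [reflect_sub, pkl.reflect_P u.2 hv huv, kl.reflect_P_longest_mul pkl hw u.2 hv huv,
      ← Finset.sum_sub_distrib, mul_sub]

end ParabolicKL

end Comparison

/-- Deodhar's parabolic Kazhdan–Lusztig polynomials of type `-1`
satisfy `P^{J,-1}_{u,v} = P_{w_J u, w_J v}` for all `u, v ∈ ᴶW`, where the
`P_{x,w}` are the ordinary Kazhdan–Lusztig polynomials (the case `J = ∅`) and
`w_J` is the longest element of `W_J`.  In particular `P^{J,-1}_{u,v}` has
constant term `1` whenever `u ≤ v`. -/
theorem stmt12 [Fintype W] (cs : CoxeterSystem M W) (J : Set B)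
    (y₀ : Polynomial ℤ)
    (pkl : ParabolicKL cs J (-1))            -- type `-1` parabolic KL polynomials
    (okl : ParabolicKL cs (∅ : Set B) y₀)    -- ordinary KL polynomials
    (wJ : W) (hwJmem : wJ ∈ Subgroup.closure (cs.simple '' J))
    (hwJlong : ∀ u ∈ Subgroup.closure (cs.simple '' J), cs.length u ≤ cs.length wJ)
    (u v : W) (hu : u ∈ cosetReps cs J) (hv : v ∈ cosetReps cs J) :
    pkl.P u v = okl.P (wJ * u) (wJ * v)
      ∧ (bruhatLE cs u v → (pkl.P u v).coeff 0 = 1) := by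
  have hw : IsParabolicLongest cs J wJ := ⟨hwJmem, hwJlong⟩
  have hP : pkl.P u v = okl.P (wJ * u) (wJ * v) := okl.P_eq_P_longest_mul pkl hw hu hv
  refine ⟨hP, fun hle ↦ ?_⟩
  rw [hP]
  exact okl.coeff_zero_P (hle.mul_left_of_mem_cosetReps hwJmem hv)
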